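/- Suppose the matrix A has a real eigenvalue of odd algebraic multiplicity. Then the spectrum of L(Q) contains the main part of [0,∞) in the sense that lim_{n→∞} μ([0,n] \ σ(L(Q))) / μ(σ(L(Q)) ∩ [0,n]) = 0, where μ denotes Lebesgue measure on ℝ. -/

import Mathlib

open MeasureTheory Set Filter Topology Metric

open scoped Classical

noncomputable section

/-- The Bloch phase factor `e^{iπt}`. -/
def blochPhase (t : ℝ) : ℂ := Complex.exp (Complex.I * Real.pi * t)

/-- `Ψ` is a Bloch function of `L_t(Q)` with Bloch eigenvalue `lam`:
nonzero, twice continuously differentiable, satisfies `-Ψ'' + QΨ = lam Ψ`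
and `Ψ(x+π) = e^{iπt} Ψ(x)`. -/
def IsBlochPair {m : ℕ} (Q : ℝ → Matrix (Fin m) (Fin m) ℂ) (t : ℝ) (lam : ℂ)
    (Ψ : ℝ → Fin m → ℂ) : Prop :=
  Ψ ≠ 0 ∧ ContDiff ℝ 2 Ψ ∧
    (∀ x : ℝ, -(deriv (deriv Ψ) x) + (Q x).mulVec (Ψ x) = lam • Ψ x) ∧
    (∀ x : ℝ, Ψ (x + Real.pi) = blochPhase t • Ψ x)

/-- `lam` is a Bloch eigenvalue of `L_t(Q)`. -/
def IsBlochEigenvalue {m : ℕ} (Q : ℝ → Matrix (Fin m) (Fin m) ℂ) (t : ℝ) (lam : ℂ) : Prop :=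
  ∃ Ψ, IsBlochPair Q t lam Ψ

/-- `Ψ` is normalized: `∫₀^π |Ψ(x)|² dx = 1` (Euclidean norm on `ℂ^m`). -/
def IsNormalized {m : ℕ} (Ψ : ℝ → Fin m → ℂ) : Prop :=
  (∫ x in (0:ℝ)..Real.pi, ∑ i, ‖Ψ x i‖ ^ 2) = 1

/-- The index set `A(k,t)`. -/
def Akt (k : ℤ) (t : ℝ) : Set ℤ :=
  if t ∈ Set.Ioo (-(2:ℝ)/3) (-(1:ℝ)/3) ∪ Set.Ioo ((1:ℝ)/3) ((2:ℝ)/3) then {k}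
  else if t ∈ Set.Ioo (-(1:ℝ)/3) ((1:ℝ)/3) then {k, -k}
  else if t ∈ Set.Ioc ((2:ℝ)/3) 1 then {k, -k - 1}
  else if t ∈ Set.Ioo (-1 : ℝ) (-(2:ℝ)/3) then {k, -k + 1}
  else ∅

/-- The spectrum of `L(Q)`: the set of Bloch eigenvalues of `L_t(Q)` for some `t ∈ (-1,1]`. -/
def SpecLQ {m : ℕ} (Q : ℝ → Matrix (Fin m) (Fin m) ℂ) : Set ℂ :=
  {lam | ∃ t ∈ Set.Ioc (-1:ℝ) 1, IsBlochEigenvalue Q t lam}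

/-- The mean matrix `A = ∫₀^π Q(x) dx`. -/
def meanMatrix {m : ℕ} (Q : ℝ → Matrix (Fin m) (Fin m) ℂ) : Matrix (Fin m) (Fin m) ℂ :=
  Matrix.of fun i j => ∫ x in (0:ℝ)..Real.pi, Q x i j




def picG {𝔸 : Type*} [NormedRing 𝔸] [NormedAlgebra ℝ 𝔸] (B : ℝ → 𝔸) : ℕ → ℝ → 𝔸
  | 0 => fun _ => 1
  | (n+1) => fun x => ∫ s in (0:ℝ)..x, B s * picG B n s

lemma picG_cont {𝔸 : Type*} [NormedRing 𝔸] [NormedAlgebra ℝ 𝔸] [CompleteSpace 𝔸] (B : ℝ → 𝔸)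
    (hB : Continuous B) (n : ℕ) : Continuous (picG B n) := by
  induction n with
  | zero => exact continuous_const
  | succ n ih =>
    exact intervalIntegral.continuous_primitive
      (fun a b => (hB.mul ih).intervalIntegrable a b) 0

lemma picG_deriv {𝔸 : Type*} [NormedRing 𝔸] [NormedAlgebra ℝ 𝔸] [CompleteSpace 𝔸] (B : ℝ → 𝔸)
    (hB : Continuous B) (n : ℕ) (x : ℝ) :
    HasDerivAt (picG B (n+1)) (B x * picG B n x) x := by
  have h := hB.mul (picG_cont B hB n)
  exact intervalIntegral.integral_hasDerivAt_right (h.intervalIntegrable _ _)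
    (h.stronglyMeasurableAtFilter _ _) h.continuousAt

lemma picG_bound {𝔸 : Type*} [NormedRing 𝔸] [NormedAlgebra ℝ 𝔸] [CompleteSpace 𝔸] (B : ℝ → 𝔸)
    (hB : Continuous B) (K : ℝ) (hK : ∀ x, ‖B x‖ ≤ K) (n : ℕ) (x : ℝ) :
    ‖picG B n x‖ ≤ ‖(1:𝔸)‖ * ((K * |x|) ^ n / n.factorial) := by
  have hK0 : 0 ≤ K := (norm_nonneg _).trans (hK 0)
  induction n generalizing x with
  | zero => simp [picG]
  | succ n ih =>
    have hc := hB.mul (picG_cont B hB n)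
    calc ‖picG B (n+1) x‖ ≤ ∫ s in uIoc 0 x, ‖B s * picG B n s‖ :=
          intervalIntegral.norm_integral_le_integral_norm_uIoc
      _ ≤ ∫ s in uIoc 0 x, (‖(1:𝔸)‖ * K ^ (n+1) / n.factorial) * |s - 0| ^ n := by
          apply setIntegral_mono_on
          · exact (intervalIntegrable_iff.1 (hc.norm.intervalIntegrable 0 x))
          · apply intervalIntegrable_iff.1
            apply Continuous.intervalIntegrable
            fun_prop
          · exact measurableSet_uIoc
          · intro s _
            calc ‖B s * picG B n s‖ ≤ ‖B s‖ * ‖picG B n s‖ := norm_mul_le _ _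
              _ ≤ K * (‖(1:𝔸)‖ * ((K * |s|) ^ n / n.factorial)) := by
                gcongr
                · exact hK s
                · exact ih s
              _ = _ := by rw [sub_zero, mul_pow]; ring
      _ = _ := by
          rw [integral_const_mul, integral_pow_abs_sub_uIoc, sub_zero, Nat.factorial_succ, mul_pow]
          push_cast
          field_simp

lemma linODE_exists {𝔸 : Type*} [NormedRing 𝔸] [NormedAlgebra ℝ 𝔸] [CompleteSpace 𝔸] (B : ℝ → 𝔸)
    (hB : Continuous B) (K : ℝ) (hK : ∀ x, ‖B x‖ ≤ K) :
    ∃ C : ℝ → 𝔸, C 0 = 1 ∧ (∀ x, HasDerivAt C (B x * C x) x) ∧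
      ∀ x, ‖C x - 1 - ∫ s in (0:ℝ)..x, B s‖ ≤
        ‖(1:𝔸)‖ * ((K * |x|) ^ 2 * Real.exp (K * |x|)) := by
  have hK0 : 0 ≤ K := (norm_nonneg _).trans (hK 0)
  have hsum : ∀ x, Summable fun n => picG B n x := fun x =>
    Summable.of_norm_bounded ((Real.summable_pow_div_factorial (K * |x|)).mul_left _)
      (fun n => picG_bound B hB K hK n x)
  have hC1 : ∀ x, (∑' n, picG B n x) = 1 + ∑' n, picG B (n+1) x := by
    intro x
    rw [(hsum x).tsum_eq_zero_add]; rfl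
  refine ⟨fun x => ∑' n, picG B n x, ?_, ?_, ?_⟩
  · show (∑' n, picG B n 0) = 1
    rw [hC1]
    have : ∀ n, picG B (n+1) 0 = 0 := fun n => by simp [picG]
    simp [this]
  · intro x
    have : HasDerivAt (fun z => ∑' n, picG B (n+1) z) (∑' n, B x * picG B n x) x := by
      have hu : Summable (fun n : ℕ => K * (‖(1:𝔸)‖ * ((K * (|x|+1)) ^ n / n.factorial))) :=
        ((Real.summable_pow_div_factorial (K * (|x|+1))).mul_left ‖(1:𝔸)‖).mul_left K
      have hs1 : Summable (fun n => picG B (n+1) x) := (summable_nat_add_iff 1).2 (hsum x)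
      have hxm : x ∈ Metric.ball (0:ℝ) (|x|+1) := by simp
      refine hasDerivAt_tsum_of_isPreconnected (g := fun n => picG B (n+1))
        (g' := fun n y => B y * picG B n y) (t := Metric.ball 0 (|x|+1)) (y₀ := x) hu
        Metric.isOpen_ball (convex_ball _ _).isPreconnected
        (fun n y _ => picG_deriv B hB n y) ?_ hxm hs1 hxm
      intro n y hy
      have hy' : |y| ≤ |x| + 1 := by simpa using (mem_ball.1 hy).le
      calc ‖B y * picG B n y‖ ≤ ‖B y‖ * ‖picG B n y‖ := norm_mul_le _ _
        _ ≤ K * (‖(1:𝔸)‖ * ((K * |y|) ^ n / n.factorial)) := by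
                gcongr
                · exact hK y
                · exact picG_bound B hB K hK n y
        _ ≤ _ := by gcongr
    rw [(hsum x).tsum_mul_left] at this
    have h2 := this.const_add 1
    exact h2.congr_of_eventuallyEq (Eventually.of_forall fun z => hC1 z)
  · intro x
    have h1 : (∑' n, picG B n x) - 1 - ∫ s in (0:ℝ)..x, B s = ∑' n, picG B (n+2) x := by
      rw [hC1, ((summable_nat_add_iff 1).2 (hsum x)).tsum_eq_zero_add]
      simp [picG]
    simp only [h1]
    have hexp : HasSum (fun n : ℕ => (K * |x|) ^ n / (n.factorial : ℝ)) (Real.exp (K * |x|)) := by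
      rw [Real.exp_eq_exp_ℝ]
      exact NormedSpace.expSeries_div_hasSum_exp (K * |x|)
    have hs := hexp.mul_left (‖(1:𝔸)‖ * (K * |x|) ^ 2)
    rw [mul_assoc] at hs
    refine tsum_of_norm_bounded hs (fun n => (picG_bound B hB K hK (n+2) x).trans ?_)
    rw [mul_assoc]
    gcongr
    rw [← mul_div_assoc, ← pow_add, add_comm 2 n]
    gcongr
    omega

lemma linODE_unique {E : Type*} [NormedRing E] [NormedAlgebra ℝ E] (B : ℝ → E)
    (K : ℝ) (hK : ∀ x, ‖B x‖ ≤ K) (f g : ℝ → E) (hf : ∀ x, HasDerivAt f (B x * f x) x)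
    (hg : ∀ x, HasDerivAt g (B x * g x) x) (h0 : f 0 = g 0) : f = g := by
  refine ODE_solution_unique_univ (v := fun t y => B t * y) (s := fun _ => univ) (K := K.toNNReal)
    ?_ (fun t => ⟨hf t, trivial⟩) (fun t => ⟨hg t, trivial⟩) h0
  intro t
  apply LipschitzWith.lipschitzOnWith
  apply LipschitzWith.of_dist_le_mul
  intro x y
  rw [dist_eq_norm, dist_eq_norm, ← mul_sub]
  refine (norm_mul_le _ _).trans ?_
  gcongr
  exact (hK t).trans (Real.le_coe_toNNReal K)


/-- Coefficient matrix of the variation-of-parameters system. -/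
def Bmat {m : ℕ} (Q : ℝ → Matrix (Fin m) (Fin m) ℂ) (ρ x : ℝ) :
    Matrix (Fin m ⊕ Fin m) (Fin m ⊕ Fin m) ℂ :=
  (1 / (2 * Complex.I * ρ) : ℂ) • Matrix.fromBlocks (Q x)
    (Complex.exp (-(2 * Complex.I * ρ * x)) • Q x)
    (-(Complex.exp (2 * Complex.I * ρ * x) • Q x)) (-(Q x))

/-- The free propagator. -/
def Dmat (m : ℕ) (ρ x : ℝ) : Matrix (Fin m ⊕ Fin m) (Fin m ⊕ Fin m) ℂ :=
  Matrix.fromBlocks (Complex.exp (Complex.I * ρ * x) • 1) 0 0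
    (Complex.exp (-(Complex.I * ρ * x)) • 1)

lemma Dmat_mul_neg (m : ℕ) (ρ x : ℝ) : Dmat m ρ x * Dmat m ρ (-x) = 1 := by
  simp [Dmat, Matrix.fromBlocks_multiply, smul_smul, ← Complex.exp_add]

lemma Dmat_neg_mul (m : ℕ) (ρ x : ℝ) : Dmat m ρ (-x) * Dmat m ρ x = 1 := by
  simp [Dmat, Matrix.fromBlocks_multiply, smul_smul, ← Complex.exp_add]

lemma Dmat_conj (m : ℕ) (ρ x : ℝ) : (Dmat m ρ x).map (starRingEnd ℂ) = Dmat m ρ (-x) := by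
  ext i j
  rcases i with i | i <;> rcases j with j | j <;>
    simp [Dmat, Matrix.one_apply, ← Complex.exp_conj, apply_ite (starRingEnd ℂ)]

lemma Bmat_shift {m : ℕ} (Q : ℝ → Matrix (Fin m) (Fin m) ℂ)
    (hQper : ∀ x : ℝ, Q (x + Real.pi) = Q x) (ρ x : ℝ) :
    Bmat Q ρ (x + Real.pi) = Dmat m ρ (-Real.pi) * Bmat Q ρ x * Dmat m ρ Real.pi := by
  have e1 : Complex.exp (-(2 * Complex.I * ρ * ((x + Real.pi : ℝ) : ℂ))) =
      Complex.exp (-(Complex.I * ρ * Real.pi)) * Complex.exp (-(2 * Complex.I * ρ * x)) *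
      Complex.exp (-(Complex.I * ρ * Real.pi)) := by
    rw [← Complex.exp_add, ← Complex.exp_add]; congr 1; push_cast; ring
  have e2 : Complex.exp (2 * Complex.I * ρ * ((x + Real.pi : ℝ) : ℂ)) =
      Complex.exp (Complex.I * ρ * Real.pi) * Complex.exp (2 * Complex.I * ρ * x) *
      Complex.exp (Complex.I * ρ * Real.pi) := by
    rw [← Complex.exp_add, ← Complex.exp_add]; congr 1; push_cast; ring
  have e3 : Complex.exp (Complex.I * ρ * Real.pi) * Complex.exp (-(Complex.I * ρ * Real.pi)) = 1 := by
    rw [← Complex.exp_add]; simp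
  have e4 : Complex.I * ρ * ((-Real.pi : ℝ) : ℂ) = -(Complex.I * ρ * Real.pi) := by push_cast; ring
  simp only [Bmat, Dmat, hQper, e1, e2, e4, neg_neg, Matrix.mul_smul, Matrix.smul_mul,
    Matrix.fromBlocks_multiply]
  generalize Complex.exp (Complex.I * ρ * Real.pi) = a at *
  generalize Complex.exp (-(Complex.I * ρ * Real.pi)) = b at *
  congr 1
  ext i j
  rcases i with i | i <;> rcases j with j | j
  · simp [← mul_assoc, e3]
  · simp; ring
  · simp; ring
  · simp [← mul_assoc, mul_comm b a, e3]

lemma Bmat_conj {m : ℕ} (Q : ℝ → Matrix (Fin m) (Fin m) ℂ)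
    (hQPT : ∀ (x : ℝ) (i j : Fin m), (starRingEnd ℂ) (Q (-x) i j) = Q x i j) (ρ x : ℝ) :
    (Bmat Q ρ (-x)).map (starRingEnd ℂ) = - Bmat Q ρ x := by
  have h2 : (starRingEnd ℂ) (2:ℂ) = 2 := Complex.conj_ofNat 2
  ext i j
  rcases i with i | i <;> rcases j with j | j <;>
    simp [Bmat, ← Complex.exp_conj, hQPT, h2]

lemma Q_bdd {m : ℕ} (Q : ℝ → Matrix (Fin m) (Fin m) ℂ) (hQcont : Continuous Q)
    (hQper : ∀ x : ℝ, Q (x + Real.pi) = Q x) :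
    ∃ k : ℝ, 0 ≤ k ∧ ∀ x i j, ‖Q x i j‖ ≤ k := by
  have hc : Continuous fun x => ∑ i, ∑ j, ‖Q x i j‖ := by fun_prop
  obtain ⟨k, hk⟩ := (isCompact_Icc (a := (0:ℝ)) (b := 0 + Real.pi)).bddAbove_image hc.continuousOn
  have hper : Function.Periodic (fun x => ∑ i, ∑ j, ‖Q x i j‖) Real.pi := fun x => by
    simp only [hQper]
  have key : ∀ x, ∑ i, ∑ j, ‖Q x i j‖ ≤ k := by
    intro x
    obtain ⟨y, hy, hxy⟩ := hper.exists_mem_Ico₀ Real.pi_pos x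
    refine le_of_eq_of_le hxy ?_
    exact hk ⟨y, ⟨hy.1, by linarith [hy.2]⟩, rfl⟩
  have hnn : ∀ x, 0 ≤ ∑ i, ∑ j, ‖Q x i j‖ := fun x => by positivity
  refine ⟨k, (hnn 0).trans (key 0), fun x i j => le_trans ?_ (key x)⟩
  calc ‖Q x i j‖ ≤ ∑ j, ‖Q x i j‖ :=
        Finset.single_le_sum (f := fun j => ‖Q x i j‖) (fun _ _ => norm_nonneg _) (Finset.mem_univ j)
    _ ≤ _ := Finset.single_le_sum (f := fun i => ∑ j, ‖Q x i j‖)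
        (fun _ _ => Finset.sum_nonneg fun _ _ => norm_nonneg _) (Finset.mem_univ i)

lemma Bmat_entry_bound {m : ℕ} (Q : ℝ → Matrix (Fin m) (Fin m) ℂ) (k : ℝ)
    (hk : ∀ x i j, ‖Q x i j‖ ≤ k) (ρ : ℝ) (hρ : 0 < ρ) (x : ℝ) (i j) :
    ‖Bmat Q ρ x i j‖ ≤ k / ρ := by
  have h1 : ‖(1 / (2 * Complex.I * ρ) : ℂ)‖ = 1 / (2 * ρ) := by
    simp [abs_of_pos hρ]
  have he : ∀ y : ℝ, ‖Complex.exp (2 * Complex.I * ρ * y)‖ = 1 := by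
    intro y
    rw [Complex.norm_exp]; simp
  have he' : ‖Complex.exp (-(2 * Complex.I * ρ * x))‖ = 1 := by
    rw [Complex.norm_exp]; simp
  have key : ‖Bmat Q ρ x i j‖ ≤ 1 / (2 * ρ) * k := by
    rcases i with i | i <;> rcases j with j | j <;>
    · simp only [Bmat, Matrix.smul_apply, norm_smul, h1, Matrix.fromBlocks_apply₁₁,
        Matrix.fromBlocks_apply₁₂, Matrix.fromBlocks_apply₂₁, Matrix.fromBlocks_apply₂₂,
        Matrix.neg_apply, norm_neg, he, he', one_mul]
      gcongr
      exact hk x i j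
  refine key.trans ?_
  have : 0 ≤ k / ρ := by
    refine div_nonneg ?_ hρ.le
    rcases i with i | i <;> exact (norm_nonneg _).trans (hk 0 i i)
  have h2 : 1 / (2 * ρ) * k = (k / ρ) / 2 := by field_simp
  rw [h2]; linarith

lemma Bmat_cont {m : ℕ} (Q : ℝ → Matrix (Fin m) (Fin m) ℂ) (hQcont : Continuous Q) (ρ : ℝ) :
    Continuous (Bmat Q ρ) := by
  unfold Bmat
  refine Continuous.fun_const_smul (Continuous.matrix_fromBlocks ?_ ?_ ?_ ?_) _ <;> fun_prop

section
attribute [local instance] Matrix.linftyOpNormedRing Matrix.linftyOpNormedAlgebra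

lemma linfty_entry {n : Type*} [Fintype n] [DecidableEq n] (M : Matrix n n ℂ) (i j : n) :
    ‖M i j‖ ≤ ‖M‖ := by
  rw [Matrix.linfty_opNorm_def]
  have h1 : ‖M i j‖₊ ≤ ∑ j, ‖M i j‖₊ :=
    Finset.single_le_sum (f := fun j => ‖M i j‖₊) (fun _ _ => zero_le) (Finset.mem_univ j)
  have h2 : ∑ j, ‖M i j‖₊ ≤ Finset.univ.sup fun i => ∑ j, ‖M i j‖₊ :=
    Finset.le_sup (f := fun i => ∑ j, ‖M i j‖₊) (Finset.mem_univ i)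
  exact_mod_cast h1.trans h2

lemma linfty_le {n : Type*} [Fintype n] [DecidableEq n] (M : Matrix n n ℂ) (k : ℝ) (hk : 0 ≤ k)
    (h : ∀ i j, ‖M i j‖ ≤ k) : ‖M‖ ≤ Fintype.card n * k := by
  rw [Matrix.linfty_opNorm_def]
  lift k to NNReal using hk
  have : (Finset.univ.sup fun i => ∑ j, ‖M i j‖₊) ≤ (Fintype.card n : NNReal) * k := by
    apply Finset.sup_le
    intro i _
    calc ∑ j, ‖M i j‖₊ ≤ ∑ j : n, k := Finset.sum_le_sum fun j _ => by exact_mod_cast h i j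
      _ = _ := by simp
  exact_mod_cast this

def conjL (n : Type*) [Fintype n] [DecidableEq n] : Matrix n n ℂ →L[ℝ] Matrix n n ℂ :=
  LinearMap.toContinuousLinearMap
    { toFun := fun M => M.map (starRingEnd ℂ)
      map_add' := fun M N => by ext; simp
      map_smul' := fun c M => by ext; simp }

def entryL (n : Type*) [Fintype n] [DecidableEq n] (i j : n) : Matrix n n ℂ →L[ℝ] ℂ :=
  LinearMap.toContinuousLinearMap
    { toFun := fun M => M i j
      map_add' := fun M N => by simp
      map_smul' := fun c M => by simp }

lemma fundSol {m : ℕ} (Q : ℝ → Matrix (Fin m) (Fin m) ℂ)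
    (hQcont : Continuous Q)
    (hQper : ∀ x : ℝ, Q (x + Real.pi) = Q x)
    (hQPT : ∀ (x : ℝ) (i j : Fin m), (starRingEnd ℂ) (Q (-x) i j) = Q x i j) :
    ∃ K : ℝ, 0 ≤ K ∧ ∀ ρ : ℝ, 1 ≤ ρ → ∃ C : ℝ → Matrix (Fin m ⊕ Fin m) (Fin m ⊕ Fin m) ℂ,
      C 0 = 1 ∧ (∀ x i j, HasDerivAt (fun y => C y i j) ((Bmat Q ρ x * C x) i j) x) ∧
      (∀ x, C (x + Real.pi) = Dmat m ρ (-Real.pi) * C x * Dmat m ρ Real.pi * C Real.pi) ∧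
      (∀ x, (C (-x)).map (starRingEnd ℂ) = C x) ∧
      (∀ i j, ‖C Real.pi i j - (1 : Matrix (Fin m ⊕ Fin m) (Fin m ⊕ Fin m) ℂ) i j
        - ∫ x in (0:ℝ)..Real.pi, Bmat Q ρ x i j‖ ≤ K / ρ ^ 2) := by
  obtain ⟨k, hk0, hk⟩ := Q_bdd Q hQcont hQper
  set N : ℝ := (Fintype.card (Fin m ⊕ Fin m) : ℝ) * k with hN
  have hN0 : 0 ≤ N := by positivity
  set U : ℝ := ‖(1 : Matrix (Fin m ⊕ Fin m) (Fin m ⊕ Fin m) ℂ)‖ with hU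
  refine ⟨U * ((N * Real.pi) ^ 2 * Real.exp (N * Real.pi)), by positivity, ?_⟩
  intro ρ hρ
  have hρ0 : 0 < ρ := by linarith
  have hB : ∀ x, ‖Bmat Q ρ x‖ ≤ N / ρ := by
    intro x
    have := linfty_le (Bmat Q ρ x) (k / ρ) (by positivity) (Bmat_entry_bound Q k hk ρ hρ0 x)
    rwa [← mul_div_assoc] at this
  have hBc := Bmat_cont Q hQcont ρ
  obtain ⟨C, hC0, hCd, hCe⟩ := linODE_exists (Bmat Q ρ) hBc (N / ρ) hB
  refine ⟨C, hC0, ?_, ?_, ?_, ?_⟩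
  · intro x i j
    exact (entryL _ i j).hasFDerivAt.comp_hasDerivAt x (hCd x)
  · intro x
    have h1 : ∀ x, HasDerivAt (fun y => C (y + Real.pi)) (Bmat Q ρ (x + Real.pi) * C (x + Real.pi)) x :=
      fun x => (hCd (x + Real.pi)).comp_add_const x Real.pi
    have h2 : ∀ x, HasDerivAt (fun y => Dmat m ρ (-Real.pi) * C y * Dmat m ρ Real.pi * C Real.pi)
        (Bmat Q ρ (x + Real.pi) * (Dmat m ρ (-Real.pi) * C x * Dmat m ρ Real.pi * C Real.pi)) x := by
      intro x
      have := (((hCd x).const_mul (Dmat m ρ (-Real.pi))).mul_const (Dmat m ρ Real.pi)).mul_const (C Real.pi)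
      convert! this using 1
      rw [Bmat_shift Q hQper]
      have h3 := Dmat_mul_neg m ρ Real.pi
      simp only [mul_assoc]
      rw [← mul_assoc (Dmat m ρ Real.pi) (Dmat m ρ (-Real.pi)), h3, one_mul]
    refine congrFun (linODE_unique (fun x => Bmat Q ρ (x + Real.pi)) (N / ρ) (fun x => hB _) _ _ h1 h2 ?_) x
    simp [hC0, Dmat_neg_mul]
  · intro x
    have h1 : ∀ x, HasDerivAt (fun y => (C (-y)).map (starRingEnd ℂ))
        (Bmat Q ρ x * (C (-x)).map (starRingEnd ℂ)) x := by
      intro x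
      have h2 : HasDerivAt (fun y => C (-y)) (-(Bmat Q ρ (-x) * C (-x))) x := by
        have := (hCd (-x)).scomp x (hasDerivAt_neg x)
        simpa using! this
      have h3 := (conjL (Fin m ⊕ Fin m)).hasFDerivAt.comp_hasDerivAt x h2
      refine HasDerivAt.congr_deriv h3 ?_
      have : conjL (Fin m ⊕ Fin m) (-(Bmat Q ρ (-x) * C (-x))) =
          (-(Bmat Q ρ (-x) * C (-x))).map (starRingEnd ℂ) := rfl
      refine this.trans ?_
      rw [← neg_mul, Matrix.map_mul, ← neg_neg (Bmat Q ρ x), ← Bmat_conj Q hQPT]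
      congr 1
      ext i j; simp
    refine congrFun (linODE_unique (Bmat Q ρ) (N / ρ) hB _ _ h1 hCd ?_) x
    simp [hC0]
  · intro i j
    have h1 := hCe Real.pi
    have h2 := (linfty_entry _ i j).trans h1
    have h3 : (∫ s in (0:ℝ)..Real.pi, Bmat Q ρ s) i j = ∫ x in (0:ℝ)..Real.pi, Bmat Q ρ x i j :=
      ((entryL _ i j).intervalIntegral_comp_comm (hBc.intervalIntegrable _ _)).symm
    rw [Matrix.sub_apply, Matrix.sub_apply, h3] at h2
    refine h2.trans ?_
    rw [abs_of_pos Real.pi_pos]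
    have h4 : N / ρ * Real.pi ≤ N * Real.pi := by
      gcongr
      exact div_le_self hN0 hρ
    calc _ ≤ U * ((N / ρ * Real.pi) ^ 2 * Real.exp (N * Real.pi)) := by gcongr
      _ = _ := by field_simp
end


lemma bloch_of_eigvec {m : ℕ} (Q : ℝ → Matrix (Fin m) (Fin m) ℂ) (hQcont : Continuous Q)
    (ρ : ℝ) (hρ : 0 < ρ) (C : ℝ → Matrix (Fin m ⊕ Fin m) (Fin m ⊕ Fin m) ℂ)
    (hC0 : C 0 = 1) (hCd : ∀ x i j, HasDerivAt (fun y => C y i j) ((Bmat Q ρ x * C x) i j) x)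
    (hCs : ∀ x, C (x + Real.pi) = Dmat m ρ (-Real.pi) * C x * Dmat m ρ Real.pi * C Real.pi)
    (v : Fin m ⊕ Fin m → ℂ) (hv : v ≠ 0) (ξ : ℂ) (hξ : ‖ξ‖ = 1)
    (hev : (Dmat m ρ Real.pi * C Real.pi).mulVec v = ξ • v) :
    (((ρ ^ 2 : ℝ)) : ℂ) ∈ SpecLQ Q := by
  have hρC : (ρ : ℂ) ≠ 0 := by exact_mod_cast hρ.ne'
  set c : ℝ → Fin m ⊕ Fin m → ℂ := fun x => (C x).mulVec v with hc
  have hcd : ∀ x i, HasDerivAt (fun y => c y i) ((Bmat Q ρ x).mulVec (c x) i) x := by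
    intro x i
    have : (Bmat Q ρ x).mulVec (c x) i = ∑ j, (Bmat Q ρ x * C x) i j * v j := by
      rw [hc]; simp only [Matrix.mulVec_mulVec]; rfl
    rw [this]
    have h := HasDerivAt.fun_sum (u := Finset.univ) (fun j _ => (hCd x i j).mul_const (v j))
    exact h
  set e : ℝ → ℂ := fun x => Complex.exp (Complex.I * ρ * x) with he
  set f : ℝ → ℂ := fun x => Complex.exp (-(Complex.I * ρ * x)) with hf
  have hef : ∀ x, e x * f x = 1 := fun x => by simp [he, hf, ← Complex.exp_add]
  have hed : ∀ x, HasDerivAt e (Complex.I * ρ * e x) x := by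
    intro x
    have h1 : HasDerivAt (fun y : ℝ => Complex.I * ρ * (y:ℂ)) (Complex.I * ρ * 1) x :=
      (Complex.ofRealCLM.hasDerivAt (x := x)).const_mul _
    have h2 := h1.cexp
    convert! h2 using 1
    rw [mul_one, mul_comm]
  have hfd : ∀ x, HasDerivAt f (-(Complex.I * ρ * f x)) x := by
    intro x
    have h1 : HasDerivAt (fun y : ℝ => Complex.I * ρ * (y:ℂ)) (Complex.I * ρ * 1) x :=
      (Complex.ofRealCLM.hasDerivAt (x := x)).const_mul _
    have h2 := h1.neg.cexp
    convert! h2 using 1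
    simp only [hf, Pi.neg_apply]; ring
  have hff : ∀ x : ℝ, Complex.exp (-(2 * Complex.I * ρ * x)) = f x * f x := by
    intro x; simp only [hf]; rw [← Complex.exp_add]; congr 1; ring
  have hee : ∀ x : ℝ, Complex.exp (2 * Complex.I * ρ * x) = e x * e x := by
    intro x; simp only [he]; rw [← Complex.exp_add]; congr 1; ring
  set a : ℝ → Fin m → ℂ := fun x => (Q x).mulVec (c x ∘ Sum.inl) with ha
  set b : ℝ → Fin m → ℂ := fun x => (Q x).mulVec (c x ∘ Sum.inr) with hb
  have hB1 : ∀ x i, (Bmat Q ρ x).mulVec (c x) (Sum.inl i) =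
      1 / (2 * Complex.I * ρ) * (a x i + f x * f x * b x i) := by
    intro x i
    simp only [Bmat, Matrix.smul_mulVec, Matrix.fromBlocks_mulVec, Pi.smul_apply, Sum.elim_inl,
      Pi.add_apply, hff, smul_eq_mul, ha, hb]
  have hB2 : ∀ x i, (Bmat Q ρ x).mulVec (c x) (Sum.inr i) =
      1 / (2 * Complex.I * ρ) * (-(e x * e x * a x i) - b x i) := by
    intro x i
    simp only [Bmat, Matrix.smul_mulVec, Matrix.fromBlocks_mulVec, Pi.smul_apply, Sum.elim_inr,
      Pi.add_apply, hee, smul_eq_mul, ha, hb, Matrix.neg_mulVec, Pi.neg_apply]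
    ring
  set Ψ : ℝ → Fin m → ℂ := fun x i => e x * c x (Sum.inl i) + f x * c x (Sum.inr i) with hΨ
  set Φ : ℝ → Fin m → ℂ := fun x i => Complex.I * ρ *
    (e x * c x (Sum.inl i) - f x * c x (Sum.inr i)) with hΦ
  have hQΨ : ∀ x i, (Q x).mulVec (Ψ x) i = e x * a x i + f x * b x i := by
    intro x i
    have : Ψ x = e x • (c x ∘ Sum.inl) + f x • (c x ∘ Sum.inr) := by ext i; simp [hΨ]
    rw [this, Matrix.mulVec_add, Matrix.mulVec_smul, Matrix.mulVec_smul]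
    simp [ha, hb]
  have hΨd : ∀ x, HasDerivAt Ψ (Φ x) x := by
    intro x
    rw [hasDerivAt_pi]
    intro i
    have h := ((hed x).mul (hcd x (Sum.inl i))).add ((hfd x).mul (hcd x (Sum.inr i)))
    refine HasDerivAt.congr_deriv h ?_
    rw [hB1, hB2]
    simp only [hΦ]
    linear_combination (-(1 / (2 * Complex.I * ρ)) * e x * a x i +
      (1 / (2 * Complex.I * ρ)) * f x * b x i) * hef x
  have hΦd : ∀ x, HasDerivAt Φ (fun i => (Q x).mulVec (Ψ x) i - ρ ^ 2 * Ψ x i) x := by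
    intro x
    rw [hasDerivAt_pi]
    intro i
    have h := (((hed x).mul (hcd x (Sum.inl i))).sub ((hfd x).mul (hcd x (Sum.inr i)))).const_mul
      (Complex.I * ρ)
    refine HasDerivAt.congr_deriv h ?_
    rw [hB1, hB2, hQΨ]
    simp only [hΨ]
    have hu : Complex.I * ρ * (1 / (2 * Complex.I * ρ)) = 1 / 2 := by
      field_simp [Complex.I_ne_zero]
    have hI := Complex.I_sq
    linear_combination (e x * (a x i + f x * f x * b x i)
      - f x * (-(e x * e x * a x i) - b x i)) * hu
      + (1/2) * (e x * a x i + f x * b x i) * hef x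
      + ρ ^ 2 * (e x * c x (Sum.inl i) + f x * c x (Sum.inr i)) * hI
  have hdΨ : deriv Ψ = Φ := funext fun x => (hΨd x).deriv
  have hΨc : Continuous Ψ := continuous_iff_continuousAt.2 fun x => (hΨd x).continuousAt
  have hdΦ : deriv Φ = fun x => (fun i => (Q x).mulVec (Ψ x) i - ρ ^ 2 * Ψ x i) :=
    funext fun x => (hΦd x).deriv
  have hcd2 : ContDiff ℝ 2 Ψ := by
    have h1 : ContDiff ℝ 1 Φ := by
      rw [contDiff_one_iff_deriv]
      refine ⟨fun x => (hΦd x).differentiableAt, ?_⟩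
      rw [hdΦ]
      have : Continuous fun x => (Q x).mulVec (Ψ x) := hQcont.matrix_mulVec hΨc
      fun_prop
    have : (2 : WithTop ℕ∞) = 1 + 1 := by norm_num
    rw [this, contDiff_succ_iff_deriv]
    refine ⟨fun x => (hΨd x).differentiableAt, by simp, ?_⟩
    rw [hdΨ]; exact h1
  have hξ0 : ξ ≠ 0 := by intro h; simp [h] at hξ
  refine ⟨Complex.arg ξ / Real.pi, ⟨?_, ?_⟩, Ψ, ?_, hcd2, ?_, ?_⟩
  · rw [lt_div_iff₀ Real.pi_pos]; linarith [Complex.neg_pi_lt_arg ξ]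
  · rw [div_le_one Real.pi_pos]; exact Complex.arg_le_pi ξ
  · intro h0
    apply hv
    have h1 : ∀ i, Ψ 0 i = 0 := fun i => by rw [h0]; rfl
    have h2 : ∀ i, Φ 0 i = 0 := fun i => by
      rw [← hdΨ, h0]; simp
    have hc0 : c 0 = v := by simp [hc, hC0]
    simp only [hΨ, hΦ, hc0, he, hf] at h1 h2
    have hIρ : Complex.I * (ρ:ℂ) ≠ 0 := mul_ne_zero Complex.I_ne_zero hρC
    ext i
    rcases i with i | i
    · have := h1 i; have h3 := h2 i
      simp [hρC] at this h3
      simp; linear_combination (this + h3) / 2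
    · have := h1 i; have h3 := h2 i
      simp [hρC] at this h3
      simp; linear_combination (this - h3) / 2
  · intro x
    rw [hdΨ, hdΦ]
    ext i
    simp
  · intro x
    have hph : blochPhase (Complex.arg ξ / Real.pi) = ξ := by
      unfold blochPhase
      have := Complex.norm_mul_exp_arg_mul_I ξ
      rw [hξ, Complex.ofReal_one, one_mul] at this
      have hpi : (Real.pi : ℂ) ≠ 0 := by exact_mod_cast Real.pi_ne_zero
      refine Eq.trans ?_ this
      congr 1
      push_cast
      field_simp
    rw [hph]
    have hcs : c (x + Real.pi) = ξ • (Dmat m ρ (-Real.pi)).mulVec (c x) := by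
      simp only [hc]
      rw [hCs, mul_assoc, ← Matrix.mulVec_mulVec, hev, Matrix.mulVec_smul, Matrix.mulVec_mulVec]
    have hea : e (x + Real.pi) = e x * e Real.pi := by
      simp only [he]; rw [← Complex.exp_add]; congr 1; push_cast; ring
    have hfa : f (x + Real.pi) = f x * f Real.pi := by
      simp only [hf]; rw [← Complex.exp_add]; congr 1; push_cast; ring
    ext i
    simp only [hΨ, hcs, hea, hfa, Pi.smul_apply, smul_eq_mul]
    have h1 : (Dmat m ρ (-Real.pi)).mulVec (c x) (Sum.inl i) = f Real.pi * c x (Sum.inl i) := by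
      simp [Dmat, Matrix.fromBlocks_mulVec, hf, Matrix.smul_mulVec]
    have h2 : (Dmat m ρ (-Real.pi)).mulVec (c x) (Sum.inr i) = e Real.pi * c x (Sum.inr i) := by
      simp [Dmat, Matrix.fromBlocks_mulVec, he, Matrix.smul_mulVec]
    rw [h1, h2]
    linear_combination ξ * (e x * c x (Sum.inl i) + f x * c x (Sum.inr i)) * hef Real.pi


/-- If `conj M * M = 1`, then a sign change of the (normalized) characteristic function
on the unit circle forces a unimodular eigenvalue. -/
lemma exists_unimodular {m : ℕ} (M : Matrix (Fin m ⊕ Fin m) (Fin m ⊕ Fin m) ℂ)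
    (hM : M.map (starRingEnd ℂ) * M = 1) (θ₁ θ₂ : ℝ)
    (h1 : (1 - Complex.exp (-(Complex.I * θ₁)) • M).det ≠ 0)
    (h2 : (Complex.exp (Complex.I * (m * (θ₂ - θ₁))) *
      ((1 - Complex.exp (-(Complex.I * θ₂)) • M).det /
      (1 - Complex.exp (-(Complex.I * θ₁)) • M).det)).re < 0) :
    ∃ ξ : ℂ, ‖ξ‖ = 1 ∧ ∃ v, v ≠ 0 ∧ M.mulVec v = ξ • v := by
  set g : ℝ → ℂ := fun θ => Complex.exp (Complex.I * (m * θ)) *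
    (1 - Complex.exp (-(Complex.I * θ)) • M).det with hg
  have hgc : Continuous g := by
    refine Continuous.mul (by fun_prop) (Continuous.matrix_det ?_)
    have h : Continuous fun θ : ℝ => Complex.exp (-(Complex.I * θ)) := by fun_prop
    exact continuous_const.sub (h.smul continuous_const)
  have hd : M.det ≠ 0 := by
    intro h
    have := congrArg Matrix.det hM
    simp [h] at this
  have hsym : ∀ θ, (starRingEnd ℂ) (g θ) * M.det = g θ := by
    intro θ
    have e1 : (starRingEnd ℂ) (1 - Complex.exp (-(Complex.I * θ)) • M).det =
        (1 - Complex.exp (Complex.I * θ) • M.map (starRingEnd ℂ)).det := by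
      rw [RingHom.map_det]
      congr 1
      ext i j
      simp [Matrix.one_apply, ← Complex.exp_conj, apply_ite (starRingEnd ℂ)]
    have e2 : (1 - Complex.exp (Complex.I * θ) • M.map (starRingEnd ℂ)).det * M.det =
        Complex.exp (Complex.I * θ) ^ (2 * m) * (1 - Complex.exp (-(Complex.I * θ)) • M).det := by
      rw [← Matrix.det_mul, sub_mul, one_mul, Matrix.smul_mul, hM]
      have : M - Complex.exp (Complex.I * θ) • (1 : Matrix (Fin m ⊕ Fin m) (Fin m ⊕ Fin m) ℂ) =
          (-Complex.exp (Complex.I * θ)) • (1 - Complex.exp (-(Complex.I * θ)) • M) := by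
        rw [smul_sub, smul_smul, neg_mul, ← Complex.exp_add]
        simp
        abel
      rw [this, Matrix.det_smul]
      congr 1
      rw [Fintype.card_sum, Fintype.card_fin, ← two_mul]
      exact (even_two_mul m).neg_pow _
    simp only [hg, map_mul]
    rw [e1, mul_assoc, e2, ← mul_assoc, ← Complex.exp_conj, ← Complex.exp_nat_mul,
      ← Complex.exp_add]
    congr 2
    simp
    ring
  have hg1 : g θ₁ ≠ 0 := mul_ne_zero (Complex.exp_ne_zero _) h1
  have hreal : ∀ θ, (g θ / g θ₁).im = 0 := by
    intro θ
    rw [← Complex.conj_eq_iff_im, map_div₀]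
    have ha := hsym θ
    have hb := hsym θ₁
    have hc1 : (starRingEnd ℂ) (g θ₁) ≠ 0 := by simpa using hg1
    rw [div_eq_div_iff hc1 hg1]
    apply mul_right_cancel₀ hd
    linear_combination g θ₁ * ha - g θ * hb
  have hh : Continuous fun θ => (g θ / g θ₁).re := by fun_prop
  have hv1 : (g θ₁ / g θ₁).re = 1 := by rw [div_self hg1]; simp
  have hv2 : (g θ₂ / g θ₁).re < 0 := by
    convert! h2 using 2
    simp only [hg]
    rw [mul_div_mul_comm, ← Complex.exp_sub]
    congr 2
    ring
  obtain ⟨θ, hθ⟩ : ∃ θ, (g θ / g θ₁).re = 0 :=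
    mem_range_of_exists_le_of_exists_ge hh ⟨θ₂, hv2.le⟩ ⟨θ₁, by rw [hv1]; norm_num⟩
  have hz : g θ / g θ₁ = 0 := Complex.ext hθ (hreal θ)
  have hg0 : g θ = 0 := by simpa [hg1] using hz
  have hdet : (1 - Complex.exp (-(Complex.I * θ)) • M).det = 0 := by
    simpa [hg, Complex.exp_ne_zero] using hg0
  obtain ⟨v, hv, hvm⟩ := Matrix.exists_mulVec_eq_zero_iff.2 hdet
  refine ⟨Complex.exp (Complex.I * θ), ?_, v, hv, ?_⟩
  · rw [mul_comm]; exact Complex.norm_exp_ofReal_mul_I θ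
  · rw [Matrix.sub_mulVec, Matrix.one_mulVec, Matrix.smul_mulVec, sub_eq_zero] at hvm
    have := congrArg (fun w => Complex.exp (Complex.I * θ) • w) hvm
    simp only [smul_smul, ← Complex.exp_add] at this
    rw [this]; simp

lemma monodromy_symm {m : ℕ} (ρ : ℝ) (C : ℝ → Matrix (Fin m ⊕ Fin m) (Fin m ⊕ Fin m) ℂ)
    (hC0 : C 0 = 1)
    (hCs : ∀ x, C (x + Real.pi) = Dmat m ρ (-Real.pi) * C x * Dmat m ρ Real.pi * C Real.pi)
    (hCc : ∀ x, (C (-x)).map (starRingEnd ℂ) = C x) :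
    (Dmat m ρ Real.pi * C Real.pi).map (starRingEnd ℂ) * (Dmat m ρ Real.pi * C Real.pi) = 1 := by
  have h1 := hCs (-Real.pi)
  rw [neg_add_cancel, hC0] at h1
  have h2 := hCc (-Real.pi)
  rw [neg_neg] at h2
  rw [Matrix.map_mul, Dmat_conj, h2, h1]
  simp only [mul_assoc]


/-- `e^{-2πiρ}` -/
def wph (ρ : ℝ) : ℂ := Complex.exp (-(2 * Complex.I * ρ * Real.pi))

/-- test angle -/
def ang (ρ x : ℝ) : ℝ := Real.pi * ρ - x / (2 * ρ)

lemma wph_norm (ρ : ℝ) : ‖wph ρ‖ = 1 := by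
  unfold wph; rw [Complex.norm_exp]; simp

lemma det_asymp {m : ℕ} (A : Matrix (Fin m) (Fin m) ℂ)
    (P : ℝ → Matrix (Fin m ⊕ Fin m) (Fin m ⊕ Fin m) ℂ) (K : ℝ)
    (h1 : ∀ ρ, 1 ≤ ρ → ∀ i j, ‖P ρ (Sum.inl i) (Sum.inl j) -
      (1 : Matrix (Fin m) (Fin m) ℂ) i j - A i j / (2 * Complex.I * ρ)‖ ≤ K / ρ ^ 2)
    (h2 : ∀ ρ, 1 ≤ ρ → ∀ i j, ‖P ρ i j -
      (1 : Matrix (Fin m ⊕ Fin m) (Fin m ⊕ Fin m) ℂ) i j‖ ≤ K / ρ)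
    (c : ℝ) (hc : 0 < c) (x : ℝ) :
    Tendsto (fun ρ : ℝ => ((ρ : ℂ) * (1 - wph ρ)⁻¹) ^ m *
      (1 - Complex.exp (-(Complex.I * (ang ρ x : ℝ))) • (Dmat m ρ Real.pi * P ρ)).det)
      (atTop ⊓ 𝓟 {ρ | c ≤ ‖1 - wph ρ‖}) (𝓝 ((-Complex.I / 2) ^ m * A.charpoly.eval (x:ℂ))) := by
  set l : Filter ℝ := atTop ⊓ 𝓟 {ρ | c ≤ ‖1 - wph ρ‖} with hl
  have hlT : l ≤ atTop := inf_le_left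
  have hl1 : ∀ᶠ ρ in l, (1:ℝ) ≤ ρ := hlT (eventually_ge_atTop 1)
  have hlc : ∀ᶠ ρ in l, c ≤ ‖1 - wph ρ‖ := by
    have : {ρ | c ≤ ‖1 - wph ρ‖} ∈ 𝓟 {ρ | c ≤ ‖1 - wph ρ‖} := mem_principal_self _
    exact (inf_le_right : l ≤ _) this
  have hinv : Tendsto (fun ρ : ℝ => ρ⁻¹) l (𝓝 0) := tendsto_inv_atTop_zero.mono_left hlT
  set E : ℝ → ℂ := fun ρ => Complex.exp (Complex.I * (x / 2) * (ρ⁻¹ : ℝ)) with hE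
  have hEn : ∀ ρ, ‖E ρ‖ = 1 := by
    intro ρ; simp only [hE]; rw [Complex.norm_exp]; simp
  have hE1 : Tendsto E l (𝓝 1) := by
    have h : Continuous fun y : ℝ => Complex.exp (Complex.I * (x / 2) * (y : ℂ)) := by fun_prop
    have := (h.tendsto 0).comp hinv
    simpa using! this
  have hEd : Tendsto (fun ρ : ℝ => (ρ : ℂ) * (1 - E ρ)) l (𝓝 (-(Complex.I * (x / 2)))) := by
    have hd : HasDerivAt (fun y : ℝ => Complex.exp (Complex.I * (x / 2) * (y : ℂ)))
        (Complex.I * (x / 2)) 0 := by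
      have h1 : HasDerivAt (fun y : ℝ => Complex.I * (x / 2) * (y:ℂ)) (Complex.I * (x / 2) * 1) 0 :=
        (Complex.ofRealCLM.hasDerivAt (x := 0)).const_mul _
      simpa using h1.cexp
    have hs := hd.tendsto_slope_zero
    have hi : Tendsto (fun ρ : ℝ => ρ⁻¹) l (𝓝[≠] 0) :=
      (tendsto_inv_atTop_nhdsGT_zero.mono_left hlT).mono_right
        (nhdsWithin_mono _ fun y hy => ne_of_gt hy)
    have := (hs.comp hi).neg
    refine this.congr fun ρ => ?_
    simp [hE]
    ring
  have hKρ : Tendsto (fun ρ : ℝ => K / ρ) l (𝓝 0) := by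
    have := hinv.const_mul K
    simpa [div_eq_mul_inv] using this
  have hKs : Tendsto (fun ρ : ℝ => Real.sqrt ρ * (K / ρ)) l (𝓝 0) := by
    have h : Tendsto (fun ρ : ℝ => K * (Real.sqrt ρ)⁻¹) l (𝓝 (K * 0)) :=
      ((tendsto_inv_atTop_zero.comp Real.tendsto_sqrt_atTop).mono_left hlT).const_mul K
    rw [mul_zero] at h
    refine h.congr' ?_
    filter_upwards [hl1] with ρ hρ
    have h0 : 0 < Real.sqrt ρ := Real.sqrt_pos.2 (by linarith)
    have h1 : Real.sqrt ρ * Real.sqrt ρ = ρ := Real.mul_self_sqrt (by linarith)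
    have hρ0 : ρ ≠ 0 := by linarith
    field_simp
    rw [pow_two, h1]

  set L : ℝ → Matrix (Fin m ⊕ Fin m) (Fin m ⊕ Fin m) ℂ := fun ρ =>
    Matrix.fromBlocks ((Real.sqrt ρ : ℂ) • 1) 0 0 ((1 - wph ρ)⁻¹ • 1) with hL
  set R : ℝ → Matrix (Fin m ⊕ Fin m) (Fin m ⊕ Fin m) ℂ := fun ρ =>
    Matrix.fromBlocks ((Real.sqrt ρ : ℂ) • 1) 0 0 1 with hR
  set N : ℝ → Matrix (Fin m ⊕ Fin m) (Fin m ⊕ Fin m) ℂ := fun ρ =>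
    1 - Complex.exp (-(Complex.I * (ang ρ x : ℝ))) • (Dmat m ρ Real.pi * P ρ) with hN
  set G : Matrix (Fin m ⊕ Fin m) (Fin m ⊕ Fin m) ℂ :=
    Matrix.fromBlocks ((-Complex.I / 2) • (Matrix.scalar (Fin m) (x:ℂ) - A)) 0 0 1 with hG
  have hphase1 : ∀ ρ : ℝ, 1 ≤ ρ → Complex.exp (-(Complex.I * (ang ρ x : ℝ))) *
      Complex.exp (Complex.I * ρ * Real.pi) = E ρ := by
    intro ρ hρ
    have : (ρ:ℂ) ≠ 0 := by exact_mod_cast (by linarith : ρ ≠ 0)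
    simp only [hE]
    rw [← Complex.exp_add]; congr 1
    simp only [ang]; push_cast; field_simp; ring
  have hphase2 : ∀ ρ : ℝ, 1 ≤ ρ → Complex.exp (-(Complex.I * (ang ρ x : ℝ))) *
      Complex.exp (-(Complex.I * ρ * Real.pi)) = wph ρ * E ρ := by
    intro ρ hρ
    have : (ρ:ℂ) ≠ 0 := by exact_mod_cast (by linarith : ρ ≠ 0)
    simp only [hE, wph]
    rw [← Complex.exp_add, ← Complex.exp_add]; congr 1
    simp only [ang]; push_cast; field_simp; ring
  have hNl : ∀ ρ : ℝ, 1 ≤ ρ → ∀ i b, N ρ (Sum.inl i) b =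
      (1 : Matrix (Fin m ⊕ Fin m) (Fin m ⊕ Fin m) ℂ) (Sum.inl i) b - E ρ * P ρ (Sum.inl i) b := by
    intro ρ hρ i b
    have : (Dmat m ρ Real.pi * P ρ) (Sum.inl i) b =
        Complex.exp (Complex.I * ρ * Real.pi) * P ρ (Sum.inl i) b := by
      simp [Matrix.mul_apply, Dmat, Fintype.sum_sum_type, Matrix.one_apply]
    simp only [hN, Matrix.sub_apply, Matrix.smul_apply, this, smul_eq_mul]
    rw [← mul_assoc, hphase1 ρ hρ]
  have hNr : ∀ ρ : ℝ, 1 ≤ ρ → ∀ i b, N ρ (Sum.inr i) b =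
      (1 : Matrix (Fin m ⊕ Fin m) (Fin m ⊕ Fin m) ℂ) (Sum.inr i) b
        - wph ρ * E ρ * P ρ (Sum.inr i) b := by
    intro ρ hρ i b
    have : (Dmat m ρ Real.pi * P ρ) (Sum.inr i) b =
        Complex.exp (-(Complex.I * ρ * Real.pi)) * P ρ (Sum.inr i) b := by
      simp [Matrix.mul_apply, Dmat, Fintype.sum_sum_type, Matrix.one_apply]
    simp only [hN, Matrix.sub_apply, Matrix.smul_apply, this, smul_eq_mul]
    rw [← mul_assoc, hphase2 ρ hρ]
  have hLl : ∀ ρ (X : Matrix (Fin m ⊕ Fin m) (Fin m ⊕ Fin m) ℂ) i b,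
      (L ρ * X) (Sum.inl i) b = Real.sqrt ρ * X (Sum.inl i) b := by
    intro ρ X i b
    simp [Matrix.mul_apply, hL, Fintype.sum_sum_type, Matrix.one_apply]
  have hLr : ∀ ρ (X : Matrix (Fin m ⊕ Fin m) (Fin m ⊕ Fin m) ℂ) i b,
      (L ρ * X) (Sum.inr i) b = (1 - wph ρ)⁻¹ * X (Sum.inr i) b := by
    intro ρ X i b
    simp [Matrix.mul_apply, hL, Fintype.sum_sum_type, Matrix.one_apply]
  have hRl : ∀ ρ (X : Matrix (Fin m ⊕ Fin m) (Fin m ⊕ Fin m) ℂ) i b,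
      (X * R ρ) b (Sum.inl i) = X b (Sum.inl i) * Real.sqrt ρ := by
    intro ρ X i b
    simp [Matrix.mul_apply, hR, Fintype.sum_sum_type, Matrix.one_apply]
  have hRr : ∀ ρ (X : Matrix (Fin m ⊕ Fin m) (Fin m ⊕ Fin m) ℂ) i b,
      (X * R ρ) b (Sum.inr i) = X b (Sum.inr i) := by
    intro ρ X i b
    simp [Matrix.mul_apply, hR, Fintype.sum_sum_type, Matrix.one_apply]
  have hT : Tendsto (fun ρ => L ρ * N ρ * R ρ) l (𝓝 G) := by
    refine tendsto_pi_nhds.2 fun a => tendsto_pi_nhds.2 fun b => ?_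
    rcases a with i | i <;> rcases b with j | j
    · skip
      have hr : Tendsto (fun ρ : ℝ => (ρ:ℂ) * (P ρ (Sum.inl i) (Sum.inl j) -
          (1 : Matrix (Fin m) (Fin m) ℂ) i j - A i j / (2 * Complex.I * ρ))) l (𝓝 0) := by
        refine squeeze_zero_norm' ?_ hKρ
        filter_upwards [hl1] with ρ hρ
        rw [norm_mul, Complex.norm_real, Real.norm_eq_abs, abs_of_nonneg (by linarith)]
        calc ρ * _ ≤ ρ * (K / ρ ^ 2) := by gcongr; exact h1 ρ hρ i j
          _ = K / ρ := by
            have : ρ ≠ 0 := by linarith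
            field_simp
      have hlim := ((hEd.mul_const ((1 : Matrix (Fin m) (Fin m) ℂ) i j)).sub
        (hE1.mul_const (A i j / (2 * Complex.I)))).sub (hE1.mul hr)
      have hval : -(Complex.I * (x / 2)) * (1 : Matrix (Fin m) (Fin m) ℂ) i j -
          1 * (A i j / (2 * Complex.I)) - 1 * 0 = G (Sum.inl i) (Sum.inl j) := by
        simp only [hG, Matrix.fromBlocks_apply₁₁, Matrix.smul_apply, Matrix.sub_apply,
          Matrix.scalar_apply, Matrix.diagonal_apply, Matrix.one_apply, smul_eq_mul]
        have hI : (1:ℂ) / Complex.I = -Complex.I := by simp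
        have : A i j / (2 * Complex.I) = A i j / 2 * (1 / Complex.I) := by field_simp
        rw [this, hI]
        split_ifs <;> ring
      rw [hval] at hlim
      refine hlim.congr' ?_
      filter_upwards [hl1] with ρ hρ
      rw [hRl, hLl, hNl ρ hρ]
      have hsq : (Real.sqrt ρ : ℂ) * Real.sqrt ρ = ρ := by
        exact_mod_cast Real.mul_self_sqrt (by linarith : 0 ≤ ρ)
      have hρC : (ρ:ℂ) ≠ 0 := by exact_mod_cast (by linarith : ρ ≠ 0)
      have h1e : (1 : Matrix (Fin m ⊕ Fin m) (Fin m ⊕ Fin m) ℂ) (Sum.inl i) (Sum.inl j) =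
        (1 : Matrix (Fin m) (Fin m) ℂ) i j := by simp [Matrix.one_apply]
      rw [h1e]
      have hA : (ρ:ℂ) * (A i j / (2 * Complex.I * ρ)) = A i j / (2 * Complex.I) := by field_simp
      linear_combination E ρ * hA - ((1 : Matrix (Fin m) (Fin m) ℂ) i j
        - E ρ * P ρ (Sum.inl i) (Sum.inl j)) * hsq
    · refine squeeze_zero_norm' ?_ hKs
      filter_upwards [hl1] with ρ hρ
      rw [hRr, hLl, hNl ρ hρ]
      have := h2 ρ hρ (Sum.inl i) (Sum.inr j)
      have h1e : (1 : Matrix (Fin m ⊕ Fin m) (Fin m ⊕ Fin m) ℂ) (Sum.inl i) (Sum.inr j) = 0 := by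
        simp [Matrix.one_apply]
      rw [h1e, sub_zero] at this
      rw [h1e, zero_sub, norm_mul, norm_neg, norm_mul, hEn, one_mul, Complex.norm_real,
        Real.norm_eq_abs, abs_of_nonneg (Real.sqrt_nonneg _)]
      gcongr
    · have hKs' := hKs.const_mul c⁻¹
      rw [mul_zero] at hKs'
      refine squeeze_zero_norm' ?_ hKs'
      filter_upwards [hl1, hlc] with ρ hρ hcρ
      rw [hRl, hLr, hNr ρ hρ]
      have := h2 ρ hρ (Sum.inr i) (Sum.inl j)
      have h1e : (1 : Matrix (Fin m ⊕ Fin m) (Fin m ⊕ Fin m) ℂ) (Sum.inr i) (Sum.inl j) = 0 := by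
        simp [Matrix.one_apply]
      rw [h1e, sub_zero] at this
      rw [h1e, zero_sub, norm_mul, norm_mul, norm_neg, norm_mul, norm_mul, hEn, wph_norm, one_mul,
        one_mul, Complex.norm_real, norm_inv,
        Real.norm_eq_abs, abs_of_nonneg (Real.sqrt_nonneg _), mul_assoc, mul_comm (Real.sqrt ρ)]
      gcongr
    · have hEP : Tendsto (fun ρ => (1 : Matrix (Fin m) (Fin m) ℂ) i j - E ρ * P ρ (Sum.inr i) (Sum.inr j))
          l (𝓝 0) := by
        have hP : Tendsto (fun ρ => P ρ (Sum.inr i) (Sum.inr j)) l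
            (𝓝 ((1 : Matrix (Fin m) (Fin m) ℂ) i j)) := by
          rw [tendsto_iff_norm_sub_tendsto_zero]
          refine squeeze_zero' (Eventually.of_forall fun _ => norm_nonneg _) ?_ hKρ
          filter_upwards [hl1] with ρ hρ
          have := h2 ρ hρ (Sum.inr i) (Sum.inr j)
          simpa [Matrix.one_apply] using this
        have := (hE1.mul hP).const_sub ((1 : Matrix (Fin m) (Fin m) ℂ) i j)
        simpa using this
      have hz : Tendsto (fun ρ => (1 - wph ρ)⁻¹ * wph ρ * ((1 : Matrix (Fin m) (Fin m) ℂ) i j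
          - E ρ * P ρ (Sum.inr i) (Sum.inr j))) l (𝓝 0) := by
        have hb := (hEP.norm).const_mul c⁻¹
        rw [norm_zero, mul_zero] at hb
        refine squeeze_zero_norm' ?_ hb
        filter_upwards [hlc] with ρ hcρ
        rw [norm_mul, norm_mul, wph_norm, mul_one, norm_inv]
        gcongr
      have hlim := hz.const_add ((1 : Matrix (Fin m) (Fin m) ℂ) i j)
      have hval : (1 : Matrix (Fin m) (Fin m) ℂ) i j + 0 = G (Sum.inr i) (Sum.inr j) := by
        simp [hG]
      rw [hval] at hlim
      refine hlim.congr' ?_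
      filter_upwards [hl1, hlc] with ρ hρ hcρ
      rw [hRr, hLr, hNr ρ hρ]
      have h1e : (1 : Matrix (Fin m ⊕ Fin m) (Fin m ⊕ Fin m) ℂ) (Sum.inr i) (Sum.inr j) =
        (1 : Matrix (Fin m) (Fin m) ℂ) i j := by simp [Matrix.one_apply]
      rw [h1e]
      have hne : 1 - wph ρ ≠ 0 := by
        rw [← norm_pos_iff]; linarith
      field_simp
      ring
  have hdet := (Continuous.matrix_det continuous_id).tendsto G |>.comp hT
  have hGd : G.det = (-Complex.I / 2) ^ m * A.charpoly.eval (x:ℂ) := by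
    rw [hG, Matrix.det_fromBlocks_zero₂₁, Matrix.det_one, mul_one, Matrix.det_smul,
      Matrix.eval_charpoly, Fintype.card_fin]
  rw [← hGd]
  refine hdet.congr' ?_
  filter_upwards [hl1] with ρ hρ
  have hsq : (Real.sqrt ρ : ℂ) * Real.sqrt ρ = ρ := by
    exact_mod_cast Real.mul_self_sqrt (by linarith : 0 ≤ ρ)
  simp only [Function.comp, id]
  rw [Matrix.det_mul, Matrix.det_mul]
  have hd1 : (L ρ).det = (Real.sqrt ρ : ℂ) ^ m * ((1 - wph ρ)⁻¹) ^ m := by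
    simp [hL, Matrix.det_fromBlocks_zero₂₁, Matrix.det_smul]
  have hd2 : (R ρ).det = (Real.sqrt ρ : ℂ) ^ m := by
    simp [hR, Matrix.det_fromBlocks_zero₂₁, Matrix.det_smul]
  rw [hd1, hd2, ← hsq]
  ring


lemma sign_change (p : Polynomial ℂ) (hp : p ≠ 0) (a : ℝ)
    (hodd : Odd (p.rootMultiplicity (a : ℂ))) :
    ∃ x₁ x₂ : ℝ, p.eval (x₁:ℂ) ≠ 0 ∧ (p.eval (x₂:ℂ) / p.eval (x₁:ℂ)).re < 0 := by
  obtain ⟨q, hq, hnd⟩ := Polynomial.exists_eq_pow_rootMultiplicity_mul_and_not_dvd p hp (a:ℂ)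
  set k := p.rootMultiplicity (a : ℂ) with hk
  have hqa : q.eval (a:ℂ) ≠ 0 := by
    intro h; exact hnd (Polynomial.dvd_iff_isRoot.2 h)
  have hc1 : Tendsto (fun e : ℝ => q.eval ((a + e : ℝ) : ℂ)) (𝓝 0) (𝓝 (q.eval (a:ℂ))) := by
    have : Continuous fun e : ℝ => q.eval ((a + e : ℝ) : ℂ) := by fun_prop
    simpa using this.tendsto 0
  have hc2 : Tendsto (fun e : ℝ => q.eval ((a - e : ℝ) : ℂ)) (𝓝 0) (𝓝 (q.eval (a:ℂ))) := by
    have : Continuous fun e : ℝ => q.eval ((a - e : ℝ) : ℂ) := by fun_prop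
    simpa using this.tendsto 0
  have hc3 := (Complex.continuous_re.tendsto _).comp (hc1.div hc2 hqa)
  rw [div_self hqa, Complex.one_re] at hc3
  have hev := (hc3.eventually (lt_mem_nhds (by norm_num : (0:ℝ) < 1))).and
    (hc2.eventually_ne hqa)
  have hev' := (hev.filter_mono (nhdsWithin_le_nhds (s := Ioi 0))).and
    (self_mem_nhdsWithin (a := (0:ℝ)) (s := Ioi 0))
  obtain ⟨e, ⟨h1, h2⟩, h3⟩ := hev'.exists
  have he : (0:ℝ) < e := h3
  have heC : (e:ℂ) ≠ 0 := by exact_mod_cast he.ne'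
  have hp1 : p.eval ((a - e : ℝ) : ℂ) = (-(e:ℂ)) ^ k * q.eval ((a - e : ℝ) : ℂ) := by
    conv_lhs => rw [hq]
    simp
  have hp2 : p.eval ((a + e : ℝ) : ℂ) = (e:ℂ) ^ k * q.eval ((a + e : ℝ) : ℂ) := by
    conv_lhs => rw [hq]
    simp
  refine ⟨a - e, a + e, ?_, ?_⟩
  · rw [hp1]; exact mul_ne_zero (pow_ne_zero _ (neg_ne_zero.2 heC)) h2
  · rw [hp1, hp2, hodd.neg_pow]
    have : (e:ℂ) ^ k * q.eval ((a + e : ℝ) : ℂ) / (-(e:ℂ) ^ k * q.eval ((a - e : ℝ) : ℂ)) =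
        -(q.eval ((a + e : ℝ) : ℂ) / q.eval ((a - e : ℝ) : ℂ)) := by
      field_simp
    rw [this, Complex.neg_re]
    simpa using h1

lemma spec_large {m : ℕ} (Q : ℝ → Matrix (Fin m) (Fin m) ℂ)
    (hQcont : Continuous Q)
    (hQper : ∀ x : ℝ, Q (x + Real.pi) = Q x)
    (hQPT : ∀ (x : ℝ) (i j : Fin m), (starRingEnd ℂ) (Q (-x) i j) = Q x i j)
    (μj : ℝ) (hodd : Odd (((meanMatrix Q).charpoly).rootMultiplicity (μj : ℂ)))
    (c : ℝ) (hc : 0 < c) :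
    ∃ R : ℝ, ∀ ρ, R ≤ ρ → c ≤ ‖1 - wph ρ‖ → (((ρ ^ 2 : ℝ)) : ℂ) ∈ SpecLQ Q := by
  obtain ⟨x₁, x₂, hx1, hx2⟩ := sign_change _ (Matrix.charpoly_monic _).ne_zero μj hodd
  obtain ⟨k, hk0, hk⟩ := Q_bdd Q hQcont hQper
  obtain ⟨K, hK0, hK⟩ := fundSol Q hQcont hQper hQPT
  choose! C hC0 hCd hCs hCc hCe using hK
  set P : ℝ → Matrix (Fin m ⊕ Fin m) (Fin m ⊕ Fin m) ℂ := fun ρ => C ρ Real.pi with hP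
  have hPl : ∀ ρ, 1 ≤ ρ → ∀ i j, ‖P ρ (Sum.inl i) (Sum.inl j) -
      (1 : Matrix (Fin m) (Fin m) ℂ) i j - meanMatrix Q i j / (2 * Complex.I * ρ)‖ ≤
      (K + k * Real.pi) / ρ ^ 2 := by
    intro ρ hρ i j
    have h := hCe ρ hρ (Sum.inl i) (Sum.inl j)
    have h1 : ∫ x in (0:ℝ)..Real.pi, Bmat Q ρ x (Sum.inl i) (Sum.inl j) =
        meanMatrix Q i j / (2 * Complex.I * ρ) := by
      simp only [Bmat, Matrix.smul_apply, Matrix.fromBlocks_apply₁₁, smul_eq_mul, meanMatrix,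
        Matrix.of_apply]
      rw [intervalIntegral.integral_const_mul]
      ring
    rw [h1] at h
    have h1e : (1 : Matrix (Fin m ⊕ Fin m) (Fin m ⊕ Fin m) ℂ) (Sum.inl i) (Sum.inl j) =
        (1 : Matrix (Fin m) (Fin m) ℂ) i j := by simp [Matrix.one_apply]
    rw [h1e] at h
    refine h.trans ?_
    gcongr
    have := Real.pi_pos
    nlinarith
  have hPa : ∀ ρ, 1 ≤ ρ → ∀ i j, ‖P ρ i j -
      (1 : Matrix (Fin m ⊕ Fin m) (Fin m ⊕ Fin m) ℂ) i j‖ ≤ (K + k * Real.pi) / ρ := by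
    intro ρ hρ i j
    have hρ0 : 0 < ρ := by linarith
    have h := hCe ρ hρ i j
    have h1 : ‖∫ x in (0:ℝ)..Real.pi, Bmat Q ρ x i j‖ ≤ k / ρ * |Real.pi - 0| :=
      intervalIntegral.norm_integral_le_of_norm_le_const
        fun x _ => Bmat_entry_bound Q k hk ρ hρ0 x i j
    rw [sub_zero, abs_of_pos Real.pi_pos] at h1
    have h2 : K / ρ ^ 2 ≤ K / ρ := by
      gcongr
      nlinarith
    have h3 := norm_add_le (C ρ Real.pi i j - (1 : Matrix (Fin m ⊕ Fin m) (Fin m ⊕ Fin m) ℂ) i j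
      - ∫ x in (0:ℝ)..Real.pi, Bmat Q ρ x i j) (∫ x in (0:ℝ)..Real.pi, Bmat Q ρ x i j)
    rw [sub_add_cancel] at h3
    have h4 : (K + k * Real.pi) / ρ = K / ρ + k / ρ * Real.pi := by ring
    rw [h4]
    linarith
  set l : Filter ℝ := atTop ⊓ 𝓟 {ρ | c ≤ ‖1 - wph ρ‖} with hl
  have hlT : l ≤ atTop := inf_le_left
  have hl1 : ∀ᶠ ρ in l, (1:ℝ) ≤ ρ := hlT (eventually_ge_atTop 1)
  have hlc : ∀ᶠ ρ in l, c ≤ ‖1 - wph ρ‖ := by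
    have : {ρ | c ≤ ‖1 - wph ρ‖} ∈ 𝓟 {ρ | c ≤ ‖1 - wph ρ‖} := mem_principal_self _
    exact (inf_le_right : l ≤ _) this
  have t1 := det_asymp (meanMatrix Q) P _ hPl hPa c hc x₁
  have t2 := det_asymp (meanMatrix Q) P _ hPl hPa c hc x₂
  have hI : (-Complex.I / 2) ^ m ≠ 0 :=
    pow_ne_zero _ (div_ne_zero (neg_ne_zero.2 Complex.I_ne_zero) two_ne_zero)
  have hlim1 := mul_ne_zero hI hx1
  have hang : Tendsto (fun ρ : ℝ => Complex.exp (Complex.I * (m * ((ang ρ x₂ : ℝ) - (ang ρ x₁ : ℝ) : ℂ))))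
      l (𝓝 1) := by
    have hinv : Tendsto (fun ρ : ℝ => ρ⁻¹) l (𝓝 0) := tendsto_inv_atTop_zero.mono_left hlT
    have hcont : Continuous fun y : ℝ => Complex.exp (Complex.I * (m * ((x₁ - x₂) / 2 * (y:ℂ)))) := by
      fun_prop
    have := (hcont.tendsto 0).comp hinv
    simp only [Complex.ofReal_zero, mul_zero, Complex.exp_zero] at this
    refine this.congr fun ρ => ?_
    simp only [Function.comp, ang]
    congr 3
    push_cast
    ring
  have t3 := (Complex.continuous_re.tendsto _).comp (hang.mul (t2.div t1 hlim1))
  have hval : (1 * ((-Complex.I / 2) ^ m * (meanMatrix Q).charpoly.eval (x₂:ℂ) /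
      ((-Complex.I / 2) ^ m * (meanMatrix Q).charpoly.eval (x₁:ℂ)))).re < 0 := by
    rw [one_mul, mul_div_mul_left _ _ hI]; exact hx2
  have e1 := t1.eventually_ne hlim1
  have e3 := t3.eventually (gt_mem_nhds hval)
  have hfin : ∀ᶠ ρ in l, (((ρ ^ 2 : ℝ)) : ℂ) ∈ SpecLQ Q := by
    filter_upwards [hl1, hlc, e1, e3] with ρ hρ hcρ h1 h3
    have hρC : (ρ:ℂ) ≠ 0 := by exact_mod_cast (by linarith : ρ ≠ 0)
    have hne : 1 - wph ρ ≠ 0 := by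
      rw [← norm_pos_iff]; linarith
    have hf : ((ρ : ℂ) * (1 - wph ρ)⁻¹) ^ m ≠ 0 :=
      pow_ne_zero _ (mul_ne_zero hρC (inv_ne_zero hne))
    simp only [Function.comp, Pi.div_apply] at h3
    rw [mul_div_mul_left _ _ hf] at h3
    obtain ⟨ξ, hξ, v, hv, hev⟩ := exists_unimodular (Dmat m ρ Real.pi * P ρ)
      (monodromy_symm ρ (C ρ) (hC0 ρ hρ) (hCs ρ hρ) (hCc ρ hρ)) (ang ρ x₁) (ang ρ x₂)
      (right_ne_zero_of_mul h1) h3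
    exact bloch_of_eigvec Q hQcont ρ (by linarith) (C ρ) (hC0 ρ hρ) (hCd ρ hρ) (hCs ρ hρ)
      v hv ξ hξ hev
  rw [hl, eventually_inf_principal, eventually_atTop] at hfin
  exact hfin

lemma wph_lower (δ : ℝ) (hδ : 0 < δ) (ρ : ℝ) (h : δ ≤ |ρ - round ρ|) : δ ≤ ‖1 - wph ρ‖ := by
  set y := ρ - round ρ with hy
  have hy2 : |y| ≤ 1 / 2 := abs_sub_round ρ
  have hw : wph ρ = Complex.exp (Complex.I * ((-(2 * Real.pi * y) : ℝ) : ℂ)) := by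
    unfold wph
    have h1 : -(2 * Complex.I * ρ * Real.pi) = Complex.I * ((-(2 * Real.pi * y) : ℝ) : ℂ)
        + ((-round ρ : ℤ) : ℂ) * (2 * Real.pi * Complex.I) := by
      rw [hy]; push_cast; ring
    rw [h1, Complex.exp_add, Complex.exp_int_mul_two_pi_mul_I, mul_one]
  rw [norm_sub_rev, hw, Complex.norm_exp_I_mul_ofReal_sub_one]
  have h2 : -(2 * Real.pi * y) / 2 = -(Real.pi * y) := by ring
  rw [h2, Real.sin_neg, norm_mul, norm_neg, Real.norm_eq_abs, Real.norm_eq_abs, abs_two]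
  have h3 : 2 / Real.pi * |Real.pi * y| ≤ |Real.sin (Real.pi * y)| := by
    apply Real.mul_abs_le_abs_sin
    rw [abs_mul, abs_of_pos Real.pi_pos]
    nlinarith [Real.pi_pos]
  rw [abs_mul, abs_of_pos Real.pi_pos] at h3
  have h4 : 2 / Real.pi * (Real.pi * |y|) = 2 * |y| := by
    have := Real.pi_ne_zero
    field_simp
  rw [h4] at h3
  linarith

lemma gap_bound (S : Set ℝ) (δ : ℝ) (hδ : 0 < δ) (hδ2 : δ ≤ 1 / 2) (R : ℝ) (hR : 1 ≤ R)
    (h : ∀ ρ, R ≤ ρ → δ ≤ |ρ - round ρ| → ρ ^ 2 ∈ S) (n : ℕ) :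
    (volume (Set.Icc (0:ℝ) (n : ℝ) \ S)).toReal ≤ R ^ 2 + δ * (8 * n + 4) := by
  have hsub : Set.Icc (0:ℝ) (n : ℝ) \ S ⊆ Set.Icc 0 (R ^ 2) ∪
      ⋃ k ∈ Finset.range (Nat.sqrt n + 2), Set.Icc (((k:ℝ) - δ) ^ 2) (((k:ℝ) + δ) ^ 2) := by
    rintro x ⟨⟨hx0, hxn⟩, hxS⟩
    set ρ := Real.sqrt x with hρ
    have hρ0 : 0 ≤ ρ := Real.sqrt_nonneg x
    have hsq : ρ ^ 2 = x := Real.sq_sqrt hx0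
    by_cases hlt : ρ < R
    · left
      refine ⟨hx0, ?_⟩
      rw [← hsq]; gcongr
    · right
      push Not at hlt
      have hd : |ρ - round ρ| < δ := by
        by_contra hcon
        push Not at hcon
        exact hxS (hsq ▸ h ρ hlt hcon)
      obtain ⟨hd1, hd2⟩ := abs_lt.1 hd
      have hpos : (0:ℝ) < (round ρ : ℝ) := by linarith
      have hposZ : 0 < round ρ := by exact_mod_cast hpos
      obtain ⟨k, hk⟩ := Int.eq_ofNat_of_zero_le hposZ.le
      have hkR : ((round ρ : ℤ) : ℝ) = (k:ℝ) := by rw [hk]; simp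
      have hk1 : (1:ℝ) ≤ k := by
        have : 1 ≤ k := by omega
        exact_mod_cast this
      rw [hkR] at hd1 hd2
      simp only [mem_iUnion, Finset.mem_range]
      refine ⟨k, ?_, ?_, ?_⟩
      · have h1 : ρ ≤ Real.sqrt n := Real.sqrt_le_sqrt hxn
        have h2 : Real.sqrt n ≤ Nat.sqrt n + 1 := Real.real_sqrt_le_nat_sqrt_succ
        have : (k:ℝ) < Nat.sqrt n + 2 := by linarith
        exact_mod_cast this
      · rw [← hsq]
        apply pow_le_pow_left₀ <;> linarith
      · rw [← hsq]
        apply pow_le_pow_left₀ <;> linarith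
  have hv : volume (Set.Icc (0:ℝ) (n : ℝ) \ S) ≤ ENNReal.ofReal (R ^ 2 + δ * (8 * n + 4)) := by
    calc volume (Set.Icc (0:ℝ) (n : ℝ) \ S) ≤ _ := measure_mono hsub
      _ ≤ _ := measure_union_le _ _
      _ ≤ ENNReal.ofReal (R ^ 2) + ∑ k ∈ Finset.range (Nat.sqrt n + 2), ENNReal.ofReal (4 * k * δ) := by
          gcongr
          · rw [Real.volume_Icc, sub_zero]
          · refine (measure_biUnion_finset_le _ _).trans ?_
            gcongr with k hk
            rw [Real.volume_Icc]
            apply le_of_eq; congr 1; ring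
      _ = ENNReal.ofReal (R ^ 2 + ∑ k ∈ Finset.range (Nat.sqrt n + 2), 4 * k * δ) := by
          rw [ENNReal.ofReal_add (by positivity) (by positivity),
            ENNReal.ofReal_sum_of_nonneg (fun k _ => by positivity)]
      _ ≤ _ := by
          apply ENNReal.ofReal_le_ofReal
          have hs : ∀ s : ℕ, ∑ k ∈ Finset.range (s + 2), 4 * (k:ℝ) * δ = δ * (2 * (s+2) * (s+1)) := by
            intro s
            induction s with
            | zero => simp [Finset.sum_range_succ]; ring
            | succ s ih => rw [Finset.sum_range_succ, ih]; push_cast; ring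
          rw [hs]
          have h1 : Nat.sqrt n * Nat.sqrt n ≤ n := Nat.sqrt_le n
          have h2 : Nat.sqrt n ≤ n := Nat.sqrt_le_self n
          have h1' : (Nat.sqrt n : ℝ) * Nat.sqrt n ≤ n := by exact_mod_cast h1
          have h2' : (Nat.sqrt n : ℝ) ≤ n := by exact_mod_cast h2
          gcongr
          nlinarith
  exact ENNReal.toReal_le_of_le_ofReal (by positivity) hv

lemma measure_part (S : Set ℝ)
    (h : ∀ δ, 0 < δ → ∃ R : ℝ, ∀ ρ, R ≤ ρ → δ ≤ |ρ - round ρ| → ρ ^ 2 ∈ S) :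
    Tendsto (fun n : ℕ => (volume (Set.Icc (0:ℝ) (n : ℝ) \ S)).toReal /
        (volume (S ∩ Set.Icc (0:ℝ) (n : ℝ))).toReal) atTop (𝓝 0) := by
  set g : ℕ → ℝ := fun n => (volume (Set.Icc (0:ℝ) (n : ℝ) \ S)).toReal with hg
  set b : ℕ → ℝ := fun n => (volume (S ∩ Set.Icc (0:ℝ) (n : ℝ))).toReal with hb
  have hg0 : ∀ n, 0 ≤ g n := fun n => ENNReal.toReal_nonneg
  have hgb : ∀ n : ℕ, (n:ℝ) ≤ g n + b n := by
    intro n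
    have h1 : volume (Set.Icc (0:ℝ) (n:ℝ)) ≤
        volume (Set.Icc (0:ℝ) (n : ℝ) \ S) + volume (S ∩ Set.Icc (0:ℝ) (n : ℝ)) := by
      refine (measure_mono ?_).trans (measure_union_le _ _)
      intro x hx
      by_cases hS : x ∈ S
      · exact Or.inr ⟨hS, hx⟩
      · exact Or.inl ⟨hx, hS⟩
    have hfin : volume (Set.Icc (0:ℝ) (n:ℝ)) ≠ ⊤ := by simp [Real.volume_Icc]
    have f1 : volume (Set.Icc (0:ℝ) (n : ℝ) \ S) ≠ ⊤ := measure_ne_top_of_subset sdiff_subset hfin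
    have f2 : volume (S ∩ Set.Icc (0:ℝ) (n : ℝ)) ≠ ⊤ :=
      measure_ne_top_of_subset inter_subset_right hfin
    have h2 := ENNReal.toReal_mono (ENNReal.add_ne_top.2 ⟨f1, f2⟩) h1
    rw [ENNReal.toReal_add f1 f2, Real.volume_Icc, sub_zero,
      ENNReal.toReal_ofReal (Nat.cast_nonneg n)] at h2
    exact h2
  have hgn : Tendsto (fun n : ℕ => g n / n) atTop (𝓝 0) := by
    rw [Metric.tendsto_atTop]
    intro ε hε
    set δ := min (1/2) (ε / 32) with hδ
    have hδ0 : 0 < δ := by positivity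
    have hδ1 : δ ≤ 1/2 := min_le_left _ _
    have hδ2 : δ ≤ ε / 32 := min_le_right _ _
    obtain ⟨R, hR⟩ := h δ hδ0
    set R' := max R 1
    obtain ⟨n₀, hn₀⟩ := exists_nat_gt (2 * R' ^ 2 / ε)
    refine ⟨n₀ + 1, fun n hn => ?_⟩
    have hb := gap_bound S δ hδ0 hδ1 R' (le_max_right _ _)
      (fun ρ hρ => hR ρ ((le_max_left _ _).trans hρ)) n
    have hn1 : (1:ℝ) ≤ n := by
      have : 1 ≤ n := by omega
      exact_mod_cast this
    have hnn : (n₀:ℝ) ≤ n := by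
      have : n₀ ≤ n := by omega
      exact_mod_cast this
    have hR2 : 2 * R' ^ 2 < ε * n := by
      rw [div_lt_iff₀ hε] at hn₀
      nlinarith
    rw [Real.dist_eq, sub_zero, abs_of_nonneg (div_nonneg (hg0 n) (by linarith)),
      div_lt_iff₀ (by linarith)]
    have h3 : δ * (8 * n + 4) ≤ ε / 32 * (12 * n) := by
      gcongr
      linarith
    have : g n ≤ R' ^ 2 + δ * (8 * n + 4) := hb
    nlinarith
  have hlim : Tendsto (fun n : ℕ => (g n / n) / (1 - g n / n)) atTop (𝓝 0) := by
    have := hgn.div (hgn.const_sub 1) (by norm_num)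
    rw [sub_zero, zero_div] at this; exact this
  refine squeeze_zero' (Eventually.of_forall fun n => div_nonneg (hg0 n) ENNReal.toReal_nonneg)
    ?_ hlim
  filter_upwards [hgn.eventually (gt_mem_nhds (by norm_num : (0:ℝ) < 1)), eventually_gt_atTop 0]
    with n hn hn0
  have hn0' : (0:ℝ) < n := by exact_mod_cast hn0
  rw [div_lt_one hn0'] at hn
  have h1 : g n / n / (1 - g n / n) = g n / (n - g n) := by
    field_simp
  rw [h1]
  have := hgb n
  have h2 : 0 < (n:ℝ) - g n := by linarith
  exact div_le_div_of_nonneg_left (hg0 n) h2 (by linarith)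

theorem statement17 {m : ℕ} (hm : 1 ≤ m) (Q : ℝ → Matrix (Fin m) (Fin m) ℂ)
    (hQcont : Continuous Q)
    (hQper : ∀ x : ℝ, Q (x + Real.pi) = Q x)
    (hQPT : ∀ (x : ℝ) (i j : Fin m), (starRingEnd ℂ) (Q (-x) i j) = Q x i j)
    (μj : ℝ) (hμj : ((meanMatrix Q).charpoly).IsRoot (μj : ℂ))
    (hodd : Odd (((meanMatrix Q).charpoly).rootMultiplicity (μj : ℂ))) :
    Filter.Tendsto
      (fun n : ℕ =>
        (volume (Set.Icc (0:ℝ) (n : ℝ) \ {x : ℝ | ((x : ℂ)) ∈ SpecLQ Q})).toReal /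
        (volume ({x : ℝ | ((x : ℂ)) ∈ SpecLQ Q} ∩ Set.Icc (0:ℝ) (n : ℝ))).toReal)
      Filter.atTop (nhds 0) := by
  apply measure_part
  intro δ hδ
  obtain ⟨R, hR⟩ := spec_large Q hQcont hQper hQPT μj hodd δ hδ
  exact ⟨R, fun ρ hρ h => hR ρ hρ (wph_lower δ hδ ρ h)⟩
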